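/- Let z₁,…,z_n ∈ ℂ with Im z_k > 0 for all k, and T(z) := ∏_{k=1}^n (z − z_k)/(z − conj(z_k)). Then T(z) → 1 as |z| → ∞, and more precisely z·(T(z) − 1) → −2i·∑_{k=1}^n Im(z_k) as |z| → ∞. -/

import Mathlib

open Complex Filter Bornology

/-!
Each factor satisfies `(w - a) / (w - b) - 1 = (b - a) / (w - b)`, so `w * ((w - a) / (w - b) - 1)`
tends to `b - a`. First-order deviations from `1` add up under multiplication, because
`w * (f * g - 1) = w * (f - 1) * g + w * (g - 1)`, and here `b - a = conj z_k - z_k = -2i Im z_k`.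
Dividing by `w` then gives `T w → 1`.
-/

section FirstOrderDeviation

variable {α : Type*} {l : Filter α}

lemma tendsto_of_tendsto_mul_sub {𝕜 : Type*} [NormedDivisionRing 𝕜] {u f : α → 𝕜} {L c : 𝕜}
    (hu : Tendsto u l (cobounded 𝕜)) (h : Tendsto (fun x => u x * (f x - L)) l (nhds c)) :
    Tendsto f l (nhds L) := by
  have inv_mul_tendsto : Tendsto (fun x => (u x)⁻¹ * (u x * (f x - L))) l (nhds 0) := by
    simpa only [zero_mul, Function.comp_apply] using (tendsto_inv₀_cobounded.comp hu).mul h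
  refine tendsto_sub_nhds_zero_iff.mp (inv_mul_tendsto.congr' ?_)
  filter_upwards [hu.eventually (eventually_ne_cobounded 0)] with x hx
  exact inv_mul_cancel_left₀ hx _

lemma tendsto_mul_prod_sub_one {ι R : Type*} [CommRing R] [TopologicalSpace R]
    [IsTopologicalSemiring R] {s : Finset ι} {u : α → R} {f : ι → α → R} {c : ι → R}
    (hf : ∀ i ∈ s, Tendsto (f i) l (nhds 1))
    (hc : ∀ i ∈ s, Tendsto (fun x => u x * (f i x - 1)) l (nhds (c i))) :
    Tendsto (fun x => u x * (∏ i ∈ s, f i x - 1)) l (nhds (∑ i ∈ s, c i)) := by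
  induction s using Finset.cons_induction with
  | empty => simp [tendsto_const_nhds]
  | cons i s hi ih =>
    rw [Finset.forall_mem_cons] at hf hc
    have prod_tendsto : Tendsto (fun x => ∏ j ∈ s, f j x) l (nhds 1) := by
      simpa only [Finset.prod_const_one] using tendsto_finsetProd s hf.2
    have sum_tendsto := (hc.1.mul prod_tendsto).add (ih hf.2 hc.2)
    simp only [Finset.prod_cons, Finset.sum_cons]
    rw [mul_one] at sum_tendsto
    exact sum_tendsto.congr fun x => by ring

end FirstOrderDeviation

section LinearFractional

variable {𝕜 : Type*} [NormedField 𝕜]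

lemma tendsto_div_sub_const_cobounded (b : 𝕜) :
    Tendsto (fun w => w / (w - b)) (cobounded 𝕜) (nhds 1) := by
  have inv_tendsto : Tendsto (fun w => (1 - b * w⁻¹)⁻¹) (cobounded 𝕜) (nhds 1) := by
    simpa using ((tendsto_inv₀_cobounded.const_mul b).const_sub 1).inv₀ (by simp)
  refine inv_tendsto.congr' ?_
  filter_upwards [eventually_ne_cobounded 0] with w hw
  rw [← div_eq_mul_inv, one_sub_div hw, inv_div]

lemma tendsto_mul_sub_div_sub_sub_one (a b : 𝕜) :
    Tendsto (fun w => w * ((w - a) / (w - b) - 1)) (cobounded 𝕜) (nhds (b - a)) := by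
  have const_mul_tendsto := (tendsto_div_sub_const_cobounded b).const_mul (b - a)
  rw [mul_one] at const_mul_tendsto
  refine const_mul_tendsto.congr' ?_
  filter_upwards [eventually_ne_cobounded b] with w hw
  rw [div_sub_one (sub_ne_zero.mpr hw)]
  ring

lemma tendsto_mul_prod_sub_div_sub_sub_one {ι : Type*} (s : Finset ι) (a b : ι → 𝕜) :
    Tendsto (fun w => w * (∏ k ∈ s, (w - a k) / (w - b k) - 1)) (cobounded 𝕜)
      (nhds (∑ k ∈ s, (b k - a k))) :=
  have factor_deviation k := tendsto_mul_sub_div_sub_sub_one (a k) (b k)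
  tendsto_mul_prod_sub_one
    (fun k _ => tendsto_of_tendsto_mul_sub tendsto_id (factor_deviation k))
    (fun k _ => factor_deviation k)

end LinearFractional

lemma conj_sub_self (z : ℂ) : (starRingEnd ℂ) z - z = -2 * I * z.im := by
  rw [← neg_sub, sub_conj]
  push_cast
  ring

theorem blaschke_product_asymptotics_general {ι : Type*} (s : Finset ι) (z : ι → ℂ) :
    let T : ℂ → ℂ := fun w => ∏ k ∈ s, (w - z k) / (w - (starRingEnd ℂ) (z k))
    Tendsto T (cobounded ℂ) (nhds 1) ∧
    Tendsto (fun w => w * (T w - 1)) (cobounded ℂ)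
      (nhds (-2 * I * ∑ k ∈ s, ((z k).im : ℂ))) := by
  intro T
  have deviation : Tendsto (fun w => w * (T w - 1)) (cobounded ℂ)
      (nhds (-2 * I * ∑ k ∈ s, ((z k).im : ℂ))) := by
    simpa only [conj_sub_self, ← Finset.mul_sum] using
      tendsto_mul_prod_sub_div_sub_sub_one s z fun k => (starRingEnd ℂ) (z k)
  exact ⟨tendsto_of_tendsto_mul_sub tendsto_id deviation, deviation⟩

/-- For points `z₁,…,z_n` in the upper half-plane, the Blaschke product
`T(z) = ∏ (z - z_k)/(z - conj z_k)` tends to `1` as `|z| → ∞`, and more precisely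
`z(T(z) - 1) → -2i ∑ Im z_k`. -/
theorem blaschke_product_asymptotics (n : ℕ) (z : Fin n → ℂ)
    (hz : ∀ k, 0 < (z k).im) :
    let T : ℂ → ℂ := fun w => ∏ k, (w - z k) / (w - (starRingEnd ℂ) (z k))
    Tendsto T (cobounded ℂ) (nhds 1) ∧
    Tendsto (fun w => w * (T w - 1)) (cobounded ℂ)
      (nhds (-2 * Complex.I * ∑ k, ((z k).im : ℂ))) :=
  blaschke_product_asymptotics_general Finset.univ z
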